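/- arXiv:1405.2221 — 3 statements merged into one kernel-verified Lean document; each statement's English description precedes it below -/
import Mathlib

section
/- Let P > 0 and 0 ≤ a₁ < a₂ be real numbers with a₁·a₂ ≤ P+1, and define f : ℝ → ℝ by f(x) = (1/2)·log(1+P+x·a₁²) + (1/2)·log(1+P+x·a₂²) − (1/2)·log(x·(a₂−a₁)²), where log is the natural logarithm. Then for every x with 0 < x ≤ 1, f(x) ≥ f(1); that is, f is minimized over (0,1] at x = 1. -/
/-!
The objective is half the logarithm of `(c + x a₁²)(c + x a₂²) / (x (a₂ - a₁)²)` with `c = P + 1`.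
For `x < y`, clearing denominators in the comparison of the two quotients leaves the difference
`(y - x) (c² - x y (a₁ a₂)²)`, so only the sign of the last factor matters. It is positive when
neither point exceeds the critical point `c / |a₁ a₂|`.
-/

/-- The objective of the outer bound for the dirty paper channel with input power `P` and fading
values `a₁`, `a₂`, as a function of the optimization variable `x`. Only `0 < x` is meaningful. -/
noncomputable def outerBoundObjective (P a₁ a₂ x : ℝ) : ℝ :=
  (1/2) * Real.log (1 + P + x * a₁^2) + (1/2) * Real.log (1 + P + x * a₂^2)
    - (1/2) * Real.log (x * (a₂ - a₁)^2)

theorem affine_mul_affine_div_lt_iff {K : Type*} [Field K] [LinearOrder K] [IsStrictOrderedRing K]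
    {d x y : K} (c α β : K) (hd : 0 < d) (hx : 0 < x) (hxy : x < y) :
    (c + y * α) * (c + y * β) / (y * d) < (c + x * α) * (c + x * β) / (x * d) ↔
      x * y * (α * β) < c ^ 2 := by
  have cross_difference :
      (c + x * α) * (c + x * β) * (y * d) - (c + y * α) * (c + y * β) * (x * d) =
        d * (y - x) * (c ^ 2 - x * y * (α * β)) := by ring
  rw [div_lt_div_iff₀ (mul_pos (hx.trans hxy) hd) (mul_pos hx hd), ← sub_pos, cross_difference,
    mul_pos_iff_of_pos_left (mul_pos hd (sub_pos.2 hxy)), sub_pos]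

theorem mul_mul_sq_lt_sq_of_mul_abs_le {K : Type*} [Field K] [LinearOrder K] [IsStrictOrderedRing K]
    {c t x y : K} (hc : 0 < c) (hx : 0 < x) (hxy : x < y) (hy : y * |t| ≤ c) :
    x * y * t ^ 2 < c ^ 2 := by
  have hy₀ : 0 < y := hx.trans hxy
  refine lt_of_mul_lt_mul_left ?_ hy₀.le
  calc y * (x * y * t ^ 2) = x * (y * |t|) ^ 2 := by rw [mul_pow, sq_abs]; ring
    _ ≤ x * c ^ 2 := by gcongr
    _ < y * c ^ 2 := by gcongr

section

variable {P a₁ a₂ x y : ℝ}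

theorem one_add_add_mul_sq_pos (hP : -1 < P) (hx : 0 ≤ x) (a : ℝ) : 0 < 1 + P + x * a ^ 2 :=
  add_pos_of_pos_of_nonneg (neg_lt_iff_pos_add'.1 hP) (by positivity)

theorem outerBoundObjective_eq_log_div (hP : -1 < P) (ha : a₁ ≠ a₂) (hx : 0 < x) :
    outerBoundObjective P a₁ a₂ x =
      (1/2) * Real.log ((1 + P + x * a₁^2) * (1 + P + x * a₂^2) / (x * (a₂ - a₁)^2)) := by
  have h₁ := (one_add_add_mul_sq_pos hP hx.le a₁).ne'
  have h₂ := (one_add_add_mul_sq_pos hP hx.le a₂).ne'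
  have hden : x * (a₂ - a₁) ^ 2 ≠ 0 := mul_ne_zero hx.ne' (pow_ne_zero 2 (sub_ne_zero.2 ha.symm))
  rw [outerBoundObjective, Real.log_div (mul_ne_zero h₁ h₂) hden, Real.log_mul h₁ h₂]
  ring

theorem outerBoundObjective_lt_iff (hP : -1 < P) (ha : a₁ ≠ a₂) (hx : 0 < x) (hxy : x < y) :
    outerBoundObjective P a₁ a₂ y < outerBoundObjective P a₁ a₂ x ↔
      x * y * (a₁ * a₂) ^ 2 < (1 + P) ^ 2 := by
  have hd : 0 < (a₂ - a₁) ^ 2 := sq_pos_of_ne_zero (sub_ne_zero.2 ha.symm)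
  have quotient_pos {z : ℝ} (hz : 0 < z) :
      0 < (1 + P + z * a₁ ^ 2) * (1 + P + z * a₂ ^ 2) / (z * (a₂ - a₁) ^ 2) :=
    div_pos (mul_pos (one_add_add_mul_sq_pos hP hz.le a₁) (one_add_add_mul_sq_pos hP hz.le a₂))
      (mul_pos hz hd)
  have hy : 0 < y := hx.trans hxy
  rw [outerBoundObjective_eq_log_div hP ha hx, outerBoundObjective_eq_log_div hP ha hy,
    mul_lt_mul_iff_right₀ one_half_pos, Real.log_lt_log_iff (quotient_pos hy) (quotient_pos hx),
    affine_mul_affine_div_lt_iff _ _ _ hd hx hxy, mul_pow a₁ a₂]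

end

theorem outer_bound_objective_min_at_one_general {P a₁ a₂ r : ℝ} (hP : -1 < P) (ha : a₁ ≠ a₂)
    (hr : r * |a₁ * a₂| ≤ 1 + P) :
    StrictAntiOn (outerBoundObjective P a₁ a₂) (Set.Ioc 0 r) := by
  intro x hx y hy hxy
  have hy_le : y * |a₁ * a₂| ≤ 1 + P := (mul_le_mul_of_nonneg_right hy.2 (abs_nonneg _)).trans hr
  exact (outerBoundObjective_lt_iff hP ha hx.1 hxy).2
    (mul_mul_sq_lt_sq_of_mul_abs_le (neg_lt_iff_pos_add'.1 hP) hx.1 hxy hy_le)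

/-- When `a₁·a₂ ≤ P+1`, the outer-bound objective `f` is minimized over `(0,1]` at
`x = 1` (appendix proof of Theorem 4 of the paper). -/
theorem outer_bound_objective_min_at_one (P a₁ a₂ : ℝ) (hP : 0 < P)
    (ha₁ : 0 ≤ a₁) (h₁₂ : a₁ < a₂) (hprod : a₁ * a₂ ≤ P + 1) :
    let f : ℝ → ℝ := fun x =>
      (1/2) * Real.log (1 + P + x * a₁^2) + (1/2) * Real.log (1 + P + x * a₂^2)
        - (1/2) * Real.log (x * (a₂ - a₁)^2)
    ∀ x : ℝ, 0 < x → x ≤ 1 → f 1 ≤ f x := by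
  have hr : 1 * |a₁ * a₂| ≤ 1 + P := by
    rwa [one_mul, abs_of_nonneg (mul_nonneg ha₁ (ha₁.trans h₁₂.le)), add_comm]
  exact fun x hx hx1 ↦ (outer_bound_objective_min_at_one_general (by linarith) h₁₂.ne hr).antitoneOn
    ⟨hx, hx1⟩ ⟨one_pos, le_rfl⟩ hx1
end

section
/- Let P > 0 and a₂ > 0 be real numbers with a₂² ≤ 1, and define g : ℝ → ℝ by g(α) = (1/4)·log(1+α·P) + (1/2)·log(1 + (1−α)·P/(a₂²+α·P+1)), where log is the natural logarithm. Then for every α with 0 ≤ α ≤ 1, g(α) ≤ g(0) = (1/2)·log(1 + P/(1+a₂²)). -/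
/-!
With `b = 1 + a₂²` and `x = α P`, the identity `(1 + (1 - α) P / (b + x)) (1 + x / b) = 1 + P / b`
turns the gap `g 0 - g α` into `(2 log (1 + x / b) - log (1 + x)) / 4`. Since `b ≤ 2`, Bernoulli's
inequality gives `1 + x ≤ 1 + 2 (x / b) ≤ (1 + x / b)²`, so this gap is nonnegative.
-/

open Real Set

/-- The rate (in nats) of the two-codeword inner bound for the dirty paper channel with two fading
values: `α` is the fraction of the power `P` given to the codeword that treats the state as noise,
and `a` is the larger fading value. This is the function `g` of the paper, defined for every real
`α`. -/
noncomputable def innerBoundRate (P a α : ℝ) : ℝ :=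
  (1 / 4) * log (1 + α * P) + (1 / 2) * log (1 + (1 - α) * P / (a ^ 2 + α * P + 1))

theorem innerBoundRate_zero (P a : ℝ) :
    innerBoundRate P a 0 = (1 / 2) * log (1 + P / (1 + a ^ 2)) := by
  simp [innerBoundRate, add_comm]

theorem log_one_add_mul_le_mul_log_one_add {p s : ℝ} (hp : 1 ≤ p) (hs : 0 < 1 + p * s) :
    log (1 + p * s) ≤ p * log (1 + s) := by
  have hs' : 0 < 1 + s := by
    by_contra! hneg
    nlinarith
  rw [← log_rpow hs']
  exact log_le_log hs (one_add_mul_self_le_rpow_one_add (by linarith) hp)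

theorem log_one_add_le_mul_log_one_add_div {p b x : ℝ} (hp : 1 ≤ p) (hb : 0 < b) (hbp : b ≤ p)
    (hx : 0 ≤ x) : log (1 + x) ≤ p * log (1 + x / b) := by
  have hxb : x ≤ p * (x / b) := by
    calc
      x = b * (x / b) := (mul_div_cancel₀ x hb.ne').symm
      _ ≤ p * (x / b) := by gcongr
  calc
    log (1 + x) ≤ log (1 + p * (x / b)) := by gcongr
    _ ≤ p * log (1 + x / b) := log_one_add_mul_le_mul_log_one_add hp (by positivity)

theorem one_add_sub_div_add_mul_one_add_div {K : Type*} [Field K] {b x y : K} (hb : b ≠ 0)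
    (hbx : b + x ≠ 0) : (1 + (y - x) / (b + x)) * (1 + x / b) = 1 + y / b := by
  field_simp
  ring

theorem innerBoundRate_zero_sub {P α : ℝ} (a : ℝ) (hP : 0 ≤ P) (hα : 0 ≤ α) :
    innerBoundRate P a 0 - innerBoundRate P a α =
      (1 / 4) * (2 * log (1 + α * P / (1 + a ^ 2)) - log (1 + α * P)) := by
  have hsplit : (1 + (1 - α) * P / (a ^ 2 + α * P + 1)) * (1 + α * P / (1 + a ^ 2)) =
      1 + P / (1 + a ^ 2) := by
    convert one_add_sub_div_add_mul_one_add_div (b := 1 + a ^ 2) (x := α * P) (y := P)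
      (by positivity) (by positivity) using 4 <;> ring
  have hpos : 0 < 1 + P / (1 + a ^ 2) := by positivity
  have hlog : log (1 + P / (1 + a ^ 2)) =
      log (1 + (1 - α) * P / (a ^ 2 + α * P + 1)) + log (1 + α * P / (1 + a ^ 2)) := by
    rw [← hsplit] at hpos ⊢
    exact log_mul (left_ne_zero_of_mul hpos.ne') (right_ne_zero_of_mul hpos.ne')
  rw [innerBoundRate_zero, hlog, innerBoundRate]
  ring

theorem inner_bound_rate_max_at_zero_general {P a : ℝ} (hP : 0 ≤ P) (ha : a ^ 2 ≤ 1) :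
    IsMaxOn (innerBoundRate P a) (Ici 0) 0 := by
  refine isMaxOn_iff.mpr fun α (hα : 0 ≤ α) => sub_nonneg.mp ?_
  have hlog : log (1 + α * P) ≤ 2 * log (1 + α * P / (1 + a ^ 2)) :=
    log_one_add_le_mul_log_one_add_div one_le_two (by positivity) (by linarith) (by positivity)
  rw [innerBoundRate_zero_sub a hP hα]
  linarith

/-- When `a₂² ≤ 1`, the inner-bound rate `g` is maximized over `[0,1]` at `α = 0`
(appendix proof of Theorem 5 of the paper). -/
theorem inner_bound_rate_max_at_zero (P a₂ : ℝ) (hP : 0 < P) (ha₂ : 0 < a₂)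
    (h : a₂^2 ≤ 1) :
    let g : ℝ → ℝ := fun α =>
      (1/4) * Real.log (1 + α * P)
        + (1/2) * Real.log (1 + (1 - α) * P / (a₂^2 + α * P + 1))
    (∀ α : ℝ, 0 ≤ α → α ≤ 1 → g α ≤ g 0) ∧
      g 0 = (1/2) * Real.log (1 + P / (1 + a₂^2)) :=
  ⟨fun _ hα _ => inner_bound_rate_max_at_zero_general hP.le h hα, innerBoundRate_zero P a₂⟩
end

section
/- Let P > 0 and 0 ≤ a₁ < a₂ be real numbers with 1 < a₂² < P+1. Then ((1/4)·log₂(1+P) + (1/4)·log₂(P+1+a₂²) − (1/4)·log₂((a₂−a₁)²) + 3/2) − ((1/2)·log₂(1+P+a₂²) − (1/4)·log₂(a₂²) − 1/2) ≤ (1/2)·log₂((a₂+a₁)/(a₂−a₁)) + 2. -/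
open Real

/-- The closed-form outer bound `R_OUT` on the capacity, in bits, for input power `P` and fading
values `a₁ < a₂`, in the regime `1 < a₂² < P + 1`; the regime is not built into the definition. -/
noncomputable def outerBound (P a₁ a₂ : ℝ) : ℝ :=
  (1 / 4) * logb 2 (1 + P) + (1 / 4) * logb 2 (P + 1 + a₂ ^ 2)
    - (1 / 4) * logb 2 ((a₂ - a₁) ^ 2) + 3 / 2

/-- The closed-form inner bound `R_IN` on the capacity, in bits, in the same regime as
`outerBound`. It depends on the larger fading value `a₂` only. -/
noncomputable def innerBound (P a₂ : ℝ) : ℝ :=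
  (1 / 2) * logb 2 (1 + P + a₂ ^ 2) - (1 / 4) * logb 2 (a₂ ^ 2) - 1 / 2

section Gap

variable {P a₁ a₂ : ℝ}

theorem outerBound_sub_innerBound_eq (ha₂ : a₂ ≠ 0) (h₁₂ : a₁ ≠ a₂) :
    outerBound P a₁ a₂ - innerBound P a₂ =
      (1 / 4) * (logb 2 (1 + P) - logb 2 (1 + P + a₂ ^ 2))
        + (1 / 4) * logb 2 ((a₂ / (a₂ - a₁)) ^ 2) + 2 := by
  have hd : a₂ - a₁ ≠ 0 := sub_ne_zero.mpr h₁₂.symm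
  rw [outerBound, innerBound, div_pow, logb_div (pow_ne_zero 2 ha₂) (pow_ne_zero 2 hd),
    add_comm P 1]
  ring

theorem outerBound_sub_innerBound_le (hP : -1 < P) (ha₂ : a₂ ≠ 0) (h₁₂ : a₁ ≠ a₂) :
    outerBound P a₁ a₂ - innerBound P a₂ ≤ (1 / 4) * logb 2 ((a₂ / (a₂ - a₁)) ^ 2) + 2 := by
  have power_le : logb 2 (1 + P) ≤ logb 2 (1 + P + a₂ ^ 2) :=
    logb_le_logb_of_le one_lt_two (by linarith) (le_add_of_nonneg_right (sq_nonneg a₂))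
  rw [outerBound_sub_innerBound_eq ha₂ h₁₂]
  linarith

end Gap

theorem gap_case_II_general (P a₁ a₂ : ℝ) (hP : -1 < P) (ha₁ : 0 ≤ a₁) (h₁₂ : a₁ < a₂) :
    outerBound P a₁ a₂ - innerBound P a₂ ≤
      (1 / 2) * logb 2 ((a₂ + a₁) / (a₂ - a₁)) + 2 := by
  have ha₂ : 0 < a₂ := ha₁.trans_lt h₁₂
  have hd : 0 < a₂ - a₁ := sub_pos.mpr h₁₂
  have ratio_le : logb 2 (a₂ / (a₂ - a₁)) ≤ logb 2 ((a₂ + a₁) / (a₂ - a₁)) :=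
    logb_le_logb_of_le one_lt_two (div_pos ha₂ hd)
      (div_le_div_of_nonneg_right (le_add_of_nonneg_right ha₁) hd.le)
  calc outerBound P a₁ a₂ - innerBound P a₂
      ≤ (1 / 4) * logb 2 ((a₂ / (a₂ - a₁)) ^ 2) + 2 :=
        outerBound_sub_innerBound_le hP ha₂.ne' h₁₂.ne
    _ = (1 / 2) * logb 2 (a₂ / (a₂ - a₁)) + 2 := by
        rw [logb_pow]
        ring
    _ ≤ (1 / 2) * logb 2 ((a₂ + a₁) / (a₂ - a₁)) + 2 := by gcongr

/-- Case II of the gap computation in Theorem 6 of the paper: regime `1 < a₂² < P+1`. -/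
theorem gap_case_II (P a₁ a₂ : ℝ) (hP : 0 < P) (ha₁ : 0 ≤ a₁) (h₁₂ : a₁ < a₂)
    (h₁ : 1 < a₂^2) (h₂ : a₂^2 < P + 1) :
    ((1/4) * Real.logb 2 (1 + P) + (1/4) * Real.logb 2 (P + 1 + a₂^2)
        - (1/4) * Real.logb 2 ((a₂ - a₁)^2) + 3/2)
      - ((1/2) * Real.logb 2 (1 + P + a₂^2) - (1/4) * Real.logb 2 (a₂^2) - 1/2)
    ≤ (1/2) * Real.logb 2 ((a₂ + a₁) / (a₂ - a₁)) + 2 :=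
  gap_case_II_general P a₁ a₂ (neg_one_lt_zero.trans hP) ha₁ h₁₂
end
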